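/- Let A be an integral domain over ℂ, I = (f, b₁, …, b_s) an ideal of A with f not a zero divisor, and suppose f = f₁ f₂ with f₁, f₂ ∈ I-related elements such that f₁f₂ ∈ I. Set A₁ = A[I₁/f₁] ⊆ Frac A where I₁ = (I, f₁), and let I₂ be the ideal of A₁ generated by I/f₁. Then A[I/f] = A₁[I₂/f₂] as subrings of Frac A. -/

import Mathlib

/-!
The fraction `a/f₁` equals `(a f₂)/(f₁ f₂)`, so `A₁ = A[I/f₁]` is contained in `A[I/f]`.
On the other hand `I₂/f₂` is generated over `A₁` by the fractions `(a/f₁)/f₂ = a/f` with `a ∈ I`,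
so `A₁[I₂/f₂]` is the subalgebra generated by `A₁` and `A[I/f]`, which is `A[I/f]`.
-/

section AffineModification

variable {A : Type*} (K : Type*) [CommRing A] [Field K] [Algebra A K]

/-- The affine modification `A[I/g]` of `A` with center `I` and divisor `g`: the subalgebra of `K`
generated by the fractions `a/g` with `a ∈ I`. The classical case is `K = Frac A` and `g ∈ I`. -/
def affineModification (I : Ideal A) (g : A) : Subalgebra A K :=
  Algebra.adjoin A ((fun a => algebraMap A K a / algebraMap A K g) '' (I : Set A))

variable {K}

/-- The ideal of a subalgebra `S` of `K` generated by the fractions `a/g` with `a ∈ I`. Fractions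
lying outside `S` are ignored, so the notion is meaningful when `A[I/g] ≤ S`. -/
def dividedIdeal (S : Subalgebra A K) (I : Ideal A) (g : A) : Ideal S :=
  Ideal.span {b : S | ∃ a ∈ I, (b : K) = algebraMap A K a / algebraMap A K g}

theorem div_mem_affineModification {I : Ideal A} {a : A} (ha : a ∈ I) (g : A) :
    algebraMap A K a / algebraMap A K g ∈ affineModification K I g :=
  Algebra.subset_adjoin ⟨a, ha, rfl⟩

variable (K) in
theorem affineModification_span (s : Set A) (g : A) :
    affineModification K (Ideal.span s) g =
      Algebra.adjoin A ((fun a => algebraMap A K a / algebraMap A K g) '' s) := by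
  have div_eq_linearMap : (fun a => algebraMap A K a / algebraMap A K g) =
      LinearMap.toSpanSingleton A K (algebraMap A K g)⁻¹ := by
    ext a
    rw [LinearMap.toSpanSingleton_apply, Algebra.smul_def, div_eq_mul_inv]
  rw [affineModification, div_eq_linearMap, Ideal.span, ← Submodule.map_coe, Submodule.map_span,
    Algebra.adjoin_span]

theorem affineModification_sup (I J : Ideal A) (g : A) :
    affineModification K (I ⊔ J) g = affineModification K I g ⊔ affineModification K J g := by
  rw [← Ideal.span_eq I, ← Ideal.span_eq J, ← Ideal.span_union]
  simp only [affineModification_span, Set.image_union, Algebra.adjoin_union]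

theorem affineModification_span_singleton_self {g : A} (hg : algebraMap A K g ≠ 0) :
    affineModification K (Ideal.span {g}) g = ⊥ := by
  rw [affineModification_span, Set.image_singleton, div_self hg, Algebra.adjoin_singleton_one]

theorem affineModification_sup_span_singleton_self (I : Ideal A) {g : A}
    (hg : algebraMap A K g ≠ 0) :
    affineModification K (I ⊔ Ideal.span {g}) g = affineModification K I g := by
  rw [affineModification_sup, affineModification_span_singleton_self hg, sup_bot_eq]

theorem affineModification_le_affineModification_mul (I : Ideal A) (g : A) {h : A}
    (hh : algebraMap A K h ≠ 0) :
    affineModification K I g ≤ affineModification K I (g * h) := by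
  refine Algebra.adjoin_le ?_
  rintro _ ⟨a, ha, rfl⟩
  have mem := div_mem_affineModification (K := K) (I.mul_mem_right h ha) (g * h)
  rwa [map_mul, map_mul, mul_div_mul_right _ _ hh] at mem

theorem image_div_dividedIdeal_generators {S : Subalgebra A K} {I : Ideal A} {g : A}
    (hS : affineModification K I g ≤ S) (h : A) :
    (fun b : S => (b : K) / algebraMap A K h) ''
        {b : S | ∃ a ∈ I, (b : K) = algebraMap A K a / algebraMap A K g} =
      (fun a => algebraMap A K a / algebraMap A K (g * h)) '' (I : Set A) := by
  simp only [map_mul, ← div_div]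
  ext x
  constructor
  · rintro ⟨b, ⟨a, ha, hb⟩, rfl⟩
    exact ⟨a, ha, by simp only [hb]⟩
  · rintro ⟨a, ha, rfl⟩
    exact ⟨⟨_, hS (div_mem_affineModification ha g)⟩, ⟨a, ha, rfl⟩, rfl⟩

theorem affineModification_dividedIdeal {S : Subalgebra A K} {I : Ideal A} {g : A}
    (hS : affineModification K I g ≤ S) (h : A) :
    (affineModification K (dividedIdeal S I g) (algebraMap A S h)).restrictScalars A =
      S ⊔ affineModification K I (g * h) := by
  have adjoin_fractions : affineModification K (dividedIdeal S I g) (algebraMap A S h) =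
      Algebra.adjoin S ((fun a => algebraMap A K a / algebraMap A K (g * h)) '' (I : Set A)) := by
    rw [dividedIdeal, affineModification_span, ← image_div_dividedIdeal_generators hS]
    rfl
  rw [adjoin_fractions, Algebra.restrictScalars_adjoin, Algebra.adjoin_union, Algebra.adjoin_eq,
    affineModification]

theorem stmt_2_general (I : Ideal A) {f₁ f₂ : A} (hf : algebraMap A K (f₁ * f₂) ≠ 0) :
    letI A₁ : Subalgebra A K := affineModification K (I ⊔ Ideal.span {f₁}) f₁
    affineModification K I (f₁ * f₂) =
      (affineModification K (dividedIdeal A₁ I f₁) (algebraMap A A₁ f₂)).restrictScalars A := by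
  rw [map_mul] at hf
  have A₁_eq := affineModification_sup_span_singleton_self I (left_ne_zero_of_mul hf)
  have A₁_le : affineModification K (I ⊔ Ideal.span {f₁}) f₁ ≤ affineModification K I (f₁ * f₂) :=
    A₁_eq.trans_le (affineModification_le_affineModification_mul I f₁ (right_ne_zero_of_mul hf))
  rw [affineModification_dividedIdeal A₁_eq.ge, sup_eq_right.mpr A₁_le]

end AffineModification

/-- Decomposition of an affine modification: if `f = f₁ f₂ ∈ I`, setting
`A₁ = A[I₁/f₁]` with `I₁ = (I, f₁)` and `I₂ ⊆ A₁` the ideal generated by `I/f₁`,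
one has `A[I/f] = A₁[I₂/f₂]` as subrings of `Frac A`. -/
theorem stmt_2 {A : Type*} [CommRing A] [IsDomain A] [Algebra ℂ A]
    (I : Ideal A) (f f₁ f₂ : A) (hf : f = f₁ * f₂) (hfI : f ∈ I) (hf0 : f ≠ 0) :
    letI K := FractionRing A
    letI ι : A → K := algebraMap A K
    letI I₁ : Ideal A := I ⊔ Ideal.span {f₁}
    letI A₁ : Subalgebra A K := Algebra.adjoin A ((fun a => ι a / ι f₁) '' (I₁ : Set A))
    letI I₂ : Ideal A₁ :=
      Ideal.span {b : A₁ | ∃ a ∈ I, (b : K) = ι a / ι f₁}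
    ((Algebra.adjoin A ((fun a => ι a / ι f) '' (I : Set A)) : Subalgebra A K) : Set K) =
      ((Algebra.adjoin A₁ ((fun b : A₁ => (b : K) / ι f₂) '' (I₂ : Set A₁)) :
        Subalgebra A₁ K) : Set K) := by
  subst hf
  have map_ne_zero : algebraMap A (FractionRing A) (f₁ * f₂) ≠ 0 :=
    IsFractionRing.to_map_ne_zero_of_mem_nonZeroDivisors (mem_nonZeroDivisors_of_ne_zero hf0)
  exact congrArg SetLike.coe (stmt_2_general I map_ne_zero)
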